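/- If a filtered group G ⊆ S_∞ (a union of subgroups G_k ⊆ S_k with G_k × G_l ⊆ G_{k+l} under concatenation) is weakly saturated and |G_5| > 1, then G equals S_∞ or S_∞^*. -/

import Mathlib

/-- Concatenation of permutations: `S_k × S_l → S_{k+l}`. -/
def concatPerm {k l : ℕ} (σ : Equiv.Perm (Fin k)) (π : Equiv.Perm (Fin l)) :
    Equiv.Perm (Fin (k + l)) :=
  finSumFinEquiv.permCongr (σ.sumCongr π)

namespace WS

open Equiv

def ext {k : ℕ} (σ : Perm (Fin k)) : Perm ℕ := σ.extendDomain Fin.equivSubtype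

lemma ext_lt {k : ℕ} (σ : Perm (Fin k)) {x : ℕ} (h : x < k) : ext σ x = σ ⟨x, h⟩ := by
  have := Perm.extendDomain_apply_image σ (Fin.equivSubtype (n := k)) ⟨x, h⟩
  simpa [ext] using this

lemma ext_ge {k : ℕ} (σ : Perm (Fin k)) {x : ℕ} (h : k ≤ x) : ext σ x = x := by
  apply Perm.extendDomain_apply_not_subtype
  omega

lemma ext_mul {k : ℕ} (σ τ : Perm (Fin k)) : ext (σ * τ) = ext σ * ext τ := by
  simp [ext]

lemma ext_inv {k : ℕ} (σ : Perm (Fin k)) : ext (σ⁻¹) = (ext σ)⁻¹ := by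
  simp [ext]

lemma ext_one {k : ℕ} : ext (1 : Perm (Fin k)) = 1 := by
  simp [ext]

lemma ext_inj {k : ℕ} {σ τ : Perm (Fin k)} (h : ext σ = ext τ) : σ = τ := by
  ext x
  have := congrArg (fun f => f (x : ℕ)) h
  simpa [ext_lt, x.2] using this

lemma ext_concat {k : ℕ} (σ : Perm (Fin k)) : ext (concatPerm σ (1 : Perm (Fin 1))) = ext σ := by
  ext x
  rcases lt_trichotomy x k with h | h | h
  · rw [ext_lt _ h, ext_lt _ (by omega : x < k + 1)]
    have : (⟨x, by omega⟩ : Fin (k+1)) = Fin.castAdd 1 ⟨x, h⟩ := rfl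
    rw [this]
    simp only [concatPerm, Equiv.permCongr_apply, finSumFinEquiv_symm_apply_castAdd]
    simp
  · subst h
    rw [ext_ge _ le_rfl, ext_lt _ (by omega : x < x + 1)]
    have : (⟨x, by omega⟩ : Fin (x+1)) = Fin.natAdd x (0 : Fin 1) := rfl
    rw [this]
    simp only [concatPerm, Equiv.permCongr_apply, finSumFinEquiv_symm_apply_natAdd]
    simp
  · rw [ext_ge _ (by omega), ext_ge _ (by omega)]

lemma ext_shift {k : ℕ} (d : ℕ) (σ : Perm (Fin k)) :
    (∀ x, x < d → ext (concatPerm (1 : Perm (Fin d)) σ) x = x) ∧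
    (∀ x, ext (concatPerm (1 : Perm (Fin d)) σ) (d + x) = d + ext σ x) := by
  constructor
  · intro x h
    rw [ext_lt _ (by omega : x < d + k)]
    have : (⟨x, by omega⟩ : Fin (d+k)) = Fin.castAdd k ⟨x, h⟩ := rfl
    rw [this]
    simp only [concatPerm, Equiv.permCongr_apply, finSumFinEquiv_symm_apply_castAdd]
    simp
  · intro x
    by_cases h : x < k
    · rw [ext_lt _ h, ext_lt _ (by omega : d + x < d + k)]
      have : (⟨d + x, by omega⟩ : Fin (d+k)) = Fin.natAdd d ⟨x, h⟩ := rfl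
      rw [this]
      simp only [concatPerm, Equiv.permCongr_apply, finSumFinEquiv_symm_apply_natAdd]
      simp
    · rw [ext_ge _ (by omega), ext_ge _ (by omega)]

lemma exists_ext {k : ℕ} (f : Perm ℕ) (hf : ∀ x, k ≤ x → f x = x) :
    ∃ σ : Perm (Fin k), ext σ = f := by
  have h1 : ∀ x, x < k → f x < k := by
    intro x hx
    by_contra h
    have h2 := hf (f x) (by omega)
    have := f.injective h2
    omega
  have h2 : ∀ x, f x < k → x < k := by
    intro x hx
    by_contra h
    have h2 := hf x (by omega)
    omega
  let τ : Perm {x : ℕ // x < k} := f.subtypePerm (fun x => ⟨h2 x, h1 x⟩)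
  refine ⟨Fin.equivSubtype.symm.permCongr τ, ?_⟩
  ext x
  by_cases h : x < k
  · rw [ext_lt _ h]
    simp [τ, Equiv.permCongr_apply]
  · rw [ext_ge _ (by omega), hf x (by omega)]

section
variable {G : (k : ℕ) → Subgroup (Perm (Fin k))}

lemma lift_aux (hcompat : ∀ (k : ℕ) (σ : Perm (Fin k)),
      σ ∈ G k ↔ concatPerm σ (1 : Perm (Fin 1)) ∈ G (k + 1)) {k : ℕ} (σ : Perm (Fin k)) (d : ℕ) :
    ∃ τ : Perm (Fin (k + d)), ext τ = ext σ ∧ (τ ∈ G (k + d) ↔ σ ∈ G k) := by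
  induction d with
  | zero => exact ⟨σ, rfl, Iff.rfl⟩
  | succ d ih =>
    obtain ⟨τ, h1, h2⟩ := ih
    exact ⟨concatPerm (l := 1) τ 1, (ext_concat τ).trans h1, (hcompat _ τ).symm.trans h2⟩

lemma lift_le (hcompat : ∀ (k : ℕ) (σ : Perm (Fin k)),
      σ ∈ G k ↔ concatPerm σ (1 : Perm (Fin 1)) ∈ G (k + 1)) {k m : ℕ} (h : k ≤ m) (σ : Perm (Fin k)) :
    ∃ τ : Perm (Fin m), ext τ = ext σ ∧ (τ ∈ G m ↔ σ ∈ G k) := by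
  obtain ⟨d, rfl⟩ := Nat.exists_eq_add_of_le h
  exact lift_aux hcompat σ d

def Mem (G : (k : ℕ) → Subgroup (Perm (Fin k))) (f : Perm ℕ) : Prop :=
  ∃ (k : ℕ) (σ : Perm (Fin k)), σ ∈ G k ∧ ext σ = f

def HG (hcompat : ∀ (k : ℕ) (σ : Perm (Fin k)),
      σ ∈ G k ↔ concatPerm σ (1 : Perm (Fin 1)) ∈ G (k + 1)) : Subgroup (Perm ℕ) where
  carrier := {f | Mem G f}
  mul_mem' := by
    rintro _ _ ⟨k, σ, hσ, rfl⟩ ⟨l, τ, hτ, rfl⟩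
    obtain ⟨σ', h1, h2⟩ := lift_le hcompat (le_max_left k l) σ
    obtain ⟨τ', h3, h4⟩ := lift_le hcompat (le_max_right k l) τ
    exact ⟨_, σ' * τ', mul_mem (h2.2 hσ) (h4.2 hτ), by rw [ext_mul, h1, h3]⟩
  one_mem' := ⟨0, 1, one_mem _, ext_one⟩
  inv_mem' := by
    rintro _ ⟨k, σ, hσ, rfl⟩
    exact ⟨k, σ⁻¹, inv_mem hσ, ext_inv σ⟩

lemma mem_G_iff (hcompat : ∀ (k : ℕ) (σ : Perm (Fin k)),
      σ ∈ G k ↔ concatPerm σ (1 : Perm (Fin 1)) ∈ G (k + 1)) {k : ℕ} (σ : Perm (Fin k)) :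
    σ ∈ G k ↔ ext σ ∈ HG hcompat := by
  constructor
  · intro h
    exact ⟨k, σ, h, rfl⟩
  · rintro ⟨l, τ, hτ, h⟩
    obtain ⟨σ', h1, h2⟩ := lift_le hcompat (le_max_left k l) σ
    obtain ⟨τ', h3, h4⟩ := lift_le hcompat (le_max_right k l) τ
    have : σ' = τ' := ext_inj (by rw [h1, h3, h])
    rw [← h2, this, h4]
    exact hτ

def sk (c x : ℕ) : ℕ := if x < c then x else x + 2

/-- The abstract properties of the union group that are used. -/
structure Good (H : Subgroup (Perm ℕ)) : Prop where
  fin : ∀ f ∈ H, ∃ k, ∀ x, k ≤ x → f x = x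
  shift : ∀ f ∈ H, ∀ d, ∃ s ∈ H, (∀ x, x < d → s x = x) ∧ ∀ x, s (d + x) = d + f x
  del : ∀ f ∈ H, ∀ (g : Perm ℕ) (i c : ℕ),
    ((f i = c ∧ f (i+1) = c+1) ∨ (f i = c+1 ∧ f (i+1) = c)) →
    (∀ x, f (sk i x) = sk c (g x)) → g ∈ H

lemma good_HG
    (hfilt : ∀ (k l : ℕ) (σ : Equiv.Perm (Fin k)) (π : Equiv.Perm (Fin l)),
      σ ∈ G k → π ∈ G l → concatPerm σ π ∈ G (k + l))
    (hcompat : ∀ (k : ℕ) (σ : Equiv.Perm (Fin k)),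
      σ ∈ G k ↔ concatPerm σ (1 : Equiv.Perm (Fin 1)) ∈ G (k + 1))
    (hws : ∀ (k : ℕ) (σ : Equiv.Perm (Fin (k + 2))), σ ∈ G (k + 2) →
      ∀ i j : Fin (k + 2), (j : ℕ) = (i : ℕ) + 1 →
      ((σ j : ℕ) = (σ i : ℕ) + 1 ∨ (σ j : ℕ) + 1 = (σ i : ℕ)) →
      ∀ (δ : Equiv.Perm (Fin k)) (a b : Fin k → Fin (k + 2)),
        StrictMono a → StrictMono b →
        (∀ x, a x ≠ i ∧ a x ≠ j) → (∀ x, b x ≠ σ i ∧ b x ≠ σ j) →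
        (∀ x, σ (a x) = b (δ x)) → δ ∈ G k) : Good (HG hcompat) where
  fin := by
    rintro _ ⟨k, σ, hσ, rfl⟩
    exact ⟨k, fun x hx => ext_ge σ hx⟩
  shift := by
    rintro _ ⟨k, σ, hσ, rfl⟩ d
    exact ⟨_, ⟨d + k, _, hfilt d k 1 σ (one_mem _) hσ, rfl⟩, ext_shift d σ⟩
  del := by
    rintro _ ⟨l, σ, hσ, rfl⟩ g i c hadj hg
    obtain ⟨k, hk1, hk2⟩ : ∃ k, l ≤ k + 2 ∧ i ≤ k := ⟨l + i, by omega, by omega⟩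
    obtain ⟨τ, h1, h2⟩ := lift_le hcompat hk1 σ
    rw [← h1] at hadj hg
    have hτ := h2.2 hσ
    have hi := ext_lt τ (by omega : i < k + 2)
    have hj := ext_lt τ (by omega : i + 1 < k + 2)
    have hi' := (τ ⟨i, by omega⟩).2
    have hj' := (τ ⟨i+1, by omega⟩).2
    have hc : c ≤ k := by omega
    have hgf : ∀ x, k ≤ x → g x = x := by
      intro x hx
      have := hg x
      rw [sk, if_neg (by omega), ext_ge _ (by omega), sk] at this
      split_ifs at this <;> omega
    obtain ⟨δ, rfl⟩ := exists_ext g hgf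
    refine ⟨k, δ, ?_, rfl⟩
    have hb : ∀ (c : ℕ) (x : Fin k), sk c x < k + 2 := by
      intro c x
      have := x.2
      unfold sk; split_ifs <;> omega
    refine hws k τ hτ ⟨i, by omega⟩ ⟨i+1, by omega⟩ rfl (by omega) δ
      (fun x => ⟨sk i x, hb i x⟩) (fun x => ⟨sk c x, hb c x⟩) ?_ ?_ ?_ ?_ ?_
    · intro x y h
      have : (x : ℕ) < y := h
      simp only [Fin.lt_def, sk]
      split_ifs <;> omega
    · intro x y h
      have : (x : ℕ) < y := h
      simp only [Fin.lt_def, sk]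
      split_ifs <;> omega
    · intro x
      simp only [ne_eq, Fin.ext_iff, sk]
      split_ifs <;> omega
    · intro x
      simp only [ne_eq, Fin.ext_iff, sk]
      split_ifs <;> omega
    · intro x
      have := hg x
      rw [ext_lt _ (hb i x), ext_lt _ x.2] at this
      exact Fin.ext this
end

section
variable {H : Subgroup (Perm ℕ)}

lemma R_refl (a : ℕ) : swap a a ∈ H := by
  rw [swap_self]; exact one_mem H

lemma R_trans {a b c : ℕ} (h1 : swap a b ∈ H) (h2 : swap b c ∈ H) : swap a c ∈ H := by
  by_cases hab : a = b
  · subst hab; exact h2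
  by_cases hac : a = c
  · subst hac; exact R_refl _
  have : swap b c * swap a b * (swap b c)⁻¹ = swap a c := by
    rw [← Equiv.swap_apply_apply]
    simp [swap_apply_of_ne_of_ne hab hac]
  rw [← this]
  exact mul_mem (mul_mem h2 h1) (inv_mem h2)

lemma R_shift (hH : Good H) {a b : ℕ} (h : swap a b ∈ H) (d : ℕ) : swap (d + a) (d + b) ∈ H := by
  obtain ⟨s, hs, h1, h2⟩ := hH.shift _ h d
  convert hs
  ext x
  by_cases hx : x < d
  · rw [h1 x hx, swap_apply_of_ne_of_ne] <;> omega
  · obtain ⟨y, rfl⟩ := Nat.exists_eq_add_of_le (not_lt.1 hx)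
    rw [h2]
    simp only [swap_apply_def]
    split_ifs <;> omega

lemma R_down (hH : Good H) {a b : ℕ} (h : swap (a + 2) (b + 2) ∈ H) : swap a b ∈ H := by
  refine hH.del _ h _ 0 0 ?_ ?_
  · left
    simp only [swap_apply_def]
    constructor <;> split_ifs <;> omega
  · intro x
    simp only [swap_apply_def, sk]
    split_ifs <;> omega

lemma R_shrink (hH : Good H) {a b : ℕ} (hab : a < b) (h : swap a (b + 2) ∈ H) : swap a b ∈ H := by
  refine hH.del _ h _ (a+1) (a+1) ?_ ?_
  · left
    simp only [swap_apply_def]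
    constructor <;> split_ifs <;> omega
  · intro x
    simp only [swap_apply_def, sk]
    split_ifs <;> omega

lemma R_zero (hH : Good H) (g a : ℕ) (h : swap a (a + g) ∈ H) : swap 0 g ∈ H := by
  have h1 : swap (a + a) (a + (a + g)) ∈ H := R_shift hH h a
  have : ∀ n, swap (2 * n) (2 * n + g) ∈ H → swap 0 g ∈ H := by
    intro n
    induction n with
    | zero => simp
    | succ n ih =>
      intro h
      apply ih
      apply R_down hH
      convert h using 2 <;> ring
  apply this a
  convert h1 using 2 <;> ring

lemma R02_of (hH : Good H) : ∀ g, swap 0 (g+1) ∈ H → swap 0 2 ∈ H := by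
  intro g
  induction g using Nat.strong_induction_on with
  | _ g ih =>
    intro h
    match g, ih, h with
    | 0, _, h => exact R_trans h (R_shift hH h 1)
    | 1, _, h => exact h
    | g+2, ih, h => exact ih g (by omega) (R_shrink hH (by omega) h)

lemma R02_of' (hH : Good H) {a b : ℕ} (hab : a < b) (h : swap a b ∈ H) : swap 0 2 ∈ H := by
  obtain ⟨g, rfl⟩ := Nat.exists_eq_add_of_lt hab
  exact R02_of hH g (R_zero hH _ a h)

set_option maxHeartbeats 4000000 in
lemma D_single (hH : Good H) (m x y : ℕ) : ∀ n, m < n → x < y →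
    swap m n * swap (n + x + 1) (n + y + 1) ∈ H → ∃ a b, a < b ∧ swap a b ∈ H := by
  intro n
  induction n using Nat.strong_induction_on with
  | _ n ih =>
    intro hmn hxy h
    by_cases h1 : n = m + 1
    · refine ⟨m + x, m + y, by omega, hH.del _ h _ m m ?_ ?_⟩
      · right
        subst h1
        simp only [Perm.mul_apply, swap_apply_def]
        constructor <;> split_ifs <;> omega
      · intro z
        subst h1
        simp only [Perm.mul_apply, swap_apply_def, sk]
        split_ifs <;> omega
    by_cases h2 : n = m + 2
    · refine ⟨m + x + 1, m + y + 1, by omega, hH.del _ h _ m (m+1) ?_ ?_⟩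
      · right
        subst h2
        simp only [Perm.mul_apply, swap_apply_def]
        constructor <;> split_ifs <;> omega
      · intro z
        subst h2
        simp only [Perm.mul_apply, swap_apply_def, sk]
        split_ifs <;> omega
    · obtain ⟨n, rfl⟩ : ∃ n', n = n' + 2 := ⟨n - 2, by omega⟩
      refine ih n (by omega) (by omega) hxy (hH.del _ h _ (m+1) (m+1) ?_ ?_)
      · left
        simp only [Perm.mul_apply, swap_apply_def]
        constructor <;> split_ifs <;> omega
      · intro z
        simp only [Perm.mul_apply, swap_apply_def, sk]
        split_ifs <;> omega

lemma C_double (hH : Good H) {p q r : ℕ} (hpq : p < q) (hqr : q < r)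
    (c : Perm ℕ) (hc : c ∈ H) (cq : c q = p) (cp : c p = r) (cr : c r = q)
    (co : ∀ x, x ≠ p → x ≠ q → x ≠ r → c x = x) : swap 0 2 ∈ H := by
  obtain ⟨u, hq⟩ := Nat.exists_eq_add_of_lt hpq
  obtain ⟨v, hr⟩ := Nat.exists_eq_add_of_lt hqr
  obtain ⟨c', hc', h1, h2⟩ := hH.shift c hc (r - p)
  obtain ⟨q', hq'⟩ : ∃ q', q' = r + u + 1 := ⟨_, rfl⟩
  obtain ⟨r', hr'⟩ : ∃ r', r' = q' + v + 1 := ⟨_, rfl⟩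
  have cq' : c' q' = r := by
    have := h2 q
    rw [cq, show r - p + q = q' by omega] at this
    omega
  have cp' : c' r = r' := by
    have := h2 p
    rw [cp, show r - p + p = r by omega] at this
    omega
  have cr' : c' r' = q' := by
    have := h2 r
    rw [cr, show r - p + r = r' by omega] at this
    omega
  have co' : ∀ x, x ≠ r → x ≠ q' → x ≠ r' → c' x = x := by
    intro x hx1 hx2 hx3
    by_cases hx : x < r - p
    · exact h1 x hx
    · obtain ⟨y, rfl⟩ := Nat.exists_eq_add_of_le (not_lt.1 hx)
      rw [h2, co] <;> omega
  have key : c' * c * c'⁻¹ * (c⁻¹ * c' * c) = swap p q * swap q' r' := by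
    have e1 : ∀ {x y}, c x = y → c⁻¹ y = x := by
      intro x y h; rw [← h]; simp
    have e2 : ∀ {x y}, c' x = y → c'⁻¹ y = x := by
      intro x y h; rw [← h]; simp
    have op := co' p (by omega) (by omega) (by omega)
    have oq := co' q (by omega) (by omega) (by omega)
    have oq' := co q' (by omega) (by omega) (by omega)
    have or' := co r' (by omega) (by omega) (by omega)
    ext x
    simp only [Perm.mul_apply]
    by_cases x1 : x = p
    · rw [x1, cp, cp', e1 or', e2 cp', cr, oq, swap_apply_of_ne_of_ne (a := q'), swap_apply_left] <;> omega
    by_cases x2 : x = q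
    · rw [x2, cq, op, e1 cq, e2 oq, cq, op, swap_apply_of_ne_of_ne (a := q'), swap_apply_right] <;> omega
    by_cases x3 : x = r
    · rw [x3, cr, oq, e1 cr, e2 cq', oq', cq', swap_apply_of_ne_of_ne (a := q'),
        swap_apply_of_ne_of_ne (a := p)] <;>
        omega
    by_cases x4 : x = q'
    · rw [x4, oq', cq', e1 cp, e2 op, cp, cp', swap_apply_left, swap_apply_of_ne_of_ne] <;> omega
    by_cases x5 : x = r'
    · rw [x5, or', cr', e1 oq', e2 cr', or', cr', swap_apply_right, swap_apply_of_ne_of_ne] <;> omega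
    have ox := co x x1 x2 x3
    have ox' := co' x x3 x4 x5
    rw [ox, ox', e1 ox, e2 ox', ox, ox', swap_apply_of_ne_of_ne x4 x5, swap_apply_of_ne_of_ne x1 x2]
  have hw : swap p q * swap q' r' ∈ H := by
    rw [← key]
    exact mul_mem (mul_mem (mul_mem hc' hc) (inv_mem hc')) (mul_mem (mul_mem (inv_mem hc) hc') hc)
  obtain ⟨a, b, hab, h⟩ := D_single hH p (q' - q - 1) (r' - q - 1) q (by omega) (by omega) (by
    convert hw using 3 <;> omega)
  exact R02_of' hH hab h

lemma R02_of_ne (hH : Good H) {f : Perm ℕ} (hf : f ∈ H) (hf1 : f ≠ 1) : swap 0 2 ∈ H := by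
  classical
  obtain ⟨k, hk⟩ := hH.fin f hf
  have hex : ∃ x, f x ≠ x := by
    by_contra! h
    exact hf1 (Perm.ext h)
  obtain ⟨a, ha, hamin⟩ : ∃ a, f a ≠ a ∧ ∀ x, x < a → f x = x :=
    ⟨Nat.find hex, Nat.find_spec hex, fun x hx => not_not.1 (Nat.find_min hex hx)⟩
  have hex2 : ∃ n, ∀ x, n < x → f x = x := ⟨k, fun x hx => hk x hx.le⟩
  obtain ⟨b, hbmax, hb⟩ : ∃ b, (∀ x, b < x → f x = x) ∧ f b ≠ b := by
    refine ⟨Nat.find hex2, Nat.find_spec hex2, fun hb => ?_⟩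
    rcases Nat.eq_zero_or_pos (Nat.find hex2) with h0 | h0
    · have h1 := Nat.find_spec hex2
      rw [h0] at hb h1
      obtain ⟨x, hx⟩ := hex
      rcases Nat.eq_zero_or_pos x with rfl | h2
      · exact hx hb
      · exact hx (h1 x h2)
    · refine Nat.find_min hex2 (show Nat.find hex2 - 1 < Nat.find hex2 by omega) ?_
      intro x hx
      rcases eq_or_lt_of_le (show Nat.find hex2 ≤ x by omega) with h | h
      · rw [← h]; exact hb
      · exact Nat.find_spec hex2 x h
  have hab : a ≤ b := by
    by_contra h
    exact ha (hbmax a (by omega))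
  have fle : ∀ x, x ≤ b → f x ≤ b := by
    intro x hx
    by_contra h
    have := f.injective (hbmax (f x) (by omega))
    omega
  have fge : ∀ x, a ≤ x → a ≤ f x := by
    intro x hx
    by_contra h
    have := f.injective (hamin (f x) (by omega))
    omega
  obtain ⟨s, hs, h1, h2⟩ := hH.shift f hf (b - a)
  have slt : ∀ x, x < b → s x = x := by
    intro x hx
    by_cases h : x < b - a
    · exact h1 x h
    · obtain ⟨y, rfl⟩ := Nat.exists_eq_add_of_le (not_lt.1 h)
      rw [h2, hamin y (by omega)]
  have sb : s b = b - a + f a := by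
    have := h2 a
    rwa [Nat.sub_add_cancel hab] at this
  have hfa := fge a le_rfl
  have hfb := fle b le_rfl
  have e1 : ∀ {x y}, f x = y → f⁻¹ y = x := by
    intro x y h; rw [← h]; simp
  have e2 : ∀ {x y}, s x = y → s⁻¹ y = x := by
    intro x y h; rw [← h]; simp
  have sinv : ∀ x, s (s⁻¹ x) = x := fun x => by simp
  have finv : ∀ x, f (f⁻¹ x) = x := fun x => by simp
  have sgt : ∀ x, b ≤ x → x ≠ s b → b < s⁻¹ x := by
    intro x hx hne
    have h3 := sinv x
    by_contra h
    rcases eq_or_lt_of_le (not_lt.1 h) with h | h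
    · rw [h] at h3; exact hne h3.symm
    · rw [slt _ h] at h3; omega
  have hfinvb : f⁻¹ b < b := by
    have h3 := finv b
    by_contra h
    rcases eq_or_lt_of_le (not_lt.1 h) with h | h
    · rw [← h] at h3; exact hb h3
    · rw [hbmax _ h] at h3; omega
  refine C_double hH (p := f b) (q := b) (r := s b) (by omega) (by omega)
    (f * s * f⁻¹ * s⁻¹) (mul_mem (mul_mem (mul_mem hf hs) (inv_mem hf)) (inv_mem hs)) ?_ ?_ ?_ ?_
  · have h3 := sgt b le_rfl (by omega)
    simp only [Perm.mul_apply]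
    rw [e1 (hbmax _ h3), sinv]
  · simp only [Perm.mul_apply]
    rw [e2 (slt (f b) (by omega)), e1 rfl, hbmax _ (by omega)]
  · simp only [Perm.mul_apply]
    rw [e2 rfl, slt _ hfinvb, finv]
  · intro x x1 x2 x3
    simp only [Perm.mul_apply]
    by_cases h : x < b
    · rw [e2 (slt x h)]
      have h4 : f⁻¹ x < b := by
        have h3 := finv x
        by_contra h
        rcases eq_or_lt_of_le (not_lt.1 h) with h | h
        · rw [← h] at h3; exact x1 h3.symm
        · rw [hbmax _ h] at h3; omega
      rw [slt _ h4, finv]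
    · have h3 := sgt x (by omega) x3
      rw [e1 (hbmax _ h3), sinv, hbmax _ (by omega)]

lemma R_parity (hH : Good H) (h : swap 0 2 ∈ H) (a b : ℕ) (hab : Even (a + b)) : swap a b ∈ H := by
  have h1 : ∀ a n, swap a (a + 2 * n) ∈ H := by
    intro a n
    induction n with
    | zero => exact R_refl _
    | succ n ih => exact R_trans ih (R_shift hH h (a + 2 * n))
  rcases le_total a b with hle | hle
  · have := h1 a ((b - a) / 2)
    rw [Nat.even_iff] at hab
    rwa [show a + 2 * ((b - a) / 2) = b by omega] at this
  · have := h1 b ((a - b) / 2)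
    rw [Nat.even_iff] at hab
    rwa [show b + 2 * ((a - b) / 2) = a by omega, swap_comm] at this

lemma mem_of_swaps : ∀ (k : ℕ) (f : Perm ℕ), (∀ x, k ≤ x → f x = x) →
    (∀ x, swap x (f x) ∈ H) → f ∈ H := by
  intro k
  induction k with
  | zero =>
    intro f hf _
    have : f = 1 := Perm.ext (fun x => hf x (Nat.zero_le _))
    rw [this]; exact one_mem _
  | succ k ih =>
    intro f hf hs
    have : swap k (f k) * f ∈ H := by
      apply ih
      · intro x hx
        rw [Perm.mul_apply]
        rcases eq_or_lt_of_le hx with rfl | h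
        · simp
        · have h1 := hf x h
          rw [h1, swap_apply_of_ne_of_ne (by omega)]
          intro h2
          rw [← h1] at h2
          have := f.injective h2
          omega
      · intro x
        rw [Perm.mul_apply]
        by_cases h1 : f x = k
        · rw [h1, swap_apply_left]
          have := hs x
          rw [h1] at this
          exact R_trans this (hs k)
        by_cases h2 : f x = f k
        · rw [h2, swap_apply_right, f.injective h2]
          exact R_refl _
        · rw [swap_apply_of_ne_of_ne h1 h2]
          exact hs x
    exact (mul_mem_cancel_left (hs k)).1 this

lemma R_all (hH : Good H) (h : swap 0 2 ∈ H) {f : Perm ℕ} (hf : f ∈ H) {x : ℕ}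
    (hx : ¬ Even (x + f x)) (a b : ℕ) : swap a b ∈ H := by
  obtain ⟨k, hk⟩ := hH.fin f hf
  have h1 : swap x (x + 2 * (k + 1)) ∈ H := R_parity hH h _ _ (by rw [Nat.even_iff]; omega)
  have h2 : swap (f x) (x + 2 * (k + 1)) ∈ H := by
    have : f * swap x (x + 2 * (k + 1)) * f⁻¹ = swap (f x) (x + 2 * (k + 1)) := by
      rw [← Equiv.swap_apply_apply, hk (x + 2 * (k + 1)) (by omega)]
    rw [← this]
    exact mul_mem (mul_mem hf h1) (inv_mem hf)
  have h3 : swap (f x) x ∈ H := R_trans h2 (by rw [swap_comm]; exact h1)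
  rw [Nat.even_iff] at hx
  by_cases h4 : Even (a + b)
  · exact R_parity hH h _ _ h4
  rw [Nat.even_iff] at h4
  by_cases h5 : Even (a + f x)
  · rw [Nat.even_iff] at h5
    exact R_trans (R_parity hH h a (f x) (by rw [Nat.even_iff]; omega))
      (R_trans h3 (R_parity hH h x b (by rw [Nat.even_iff]; omega)))
  · rw [Nat.even_iff] at h5
    rw [swap_comm] at h3
    exact R_trans (R_parity hH h a x (by rw [Nat.even_iff]; omega))
      (R_trans h3 (R_parity hH h (f x) b (by rw [Nat.even_iff]; omega)))
end

end WS

/-- If a filtered group `G ⊆ S_∞` (a union of subgroups `G_k ⊆ S_k` with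
`G_k × G_l ⊆ G_{k+l}` under concatenation, and `G_k = G ∩ S_k` under the
standard inclusions `σ ↦ σ ⊗ 1`) is weakly saturated — whenever `σ ∈ G_k`
satisfies `σ(i+1) = σ(i) ± 1`, the permutation `σ^{(i,i+1)} ∈ S_{k-2}` obtained
by deleting positions `i, i+1` and their images (and relabelling monotonically)
belongs to `G_{k-2}` — and `|G_5| > 1`, then `G` is `S_∞` or `S_∞^*`. -/
theorem weakly_saturated_filtered_group_dichotomy
    (G : (k : ℕ) → Subgroup (Equiv.Perm (Fin k)))
    (hfilt : ∀ (k l : ℕ) (σ : Equiv.Perm (Fin k)) (π : Equiv.Perm (Fin l)),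
      σ ∈ G k → π ∈ G l → concatPerm σ π ∈ G (k + l))
    (hcompat : ∀ (k : ℕ) (σ : Equiv.Perm (Fin k)),
      σ ∈ G k ↔ concatPerm σ (1 : Equiv.Perm (Fin 1)) ∈ G (k + 1))
    (hws : ∀ (k : ℕ) (σ : Equiv.Perm (Fin (k + 2))), σ ∈ G (k + 2) →
      ∀ i j : Fin (k + 2), (j : ℕ) = (i : ℕ) + 1 →
      ((σ j : ℕ) = (σ i : ℕ) + 1 ∨ (σ j : ℕ) + 1 = (σ i : ℕ)) →
      ∀ (δ : Equiv.Perm (Fin k)) (a b : Fin k → Fin (k + 2)),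
        StrictMono a → StrictMono b →
        (∀ x, a x ≠ i ∧ a x ≠ j) → (∀ x, b x ≠ σ i ∧ b x ≠ σ j) →
        (∀ x, σ (a x) = b (δ x)) → δ ∈ G k)
    (h5 : ∃ σ ∈ G 5, σ ≠ 1) :
    (∀ (k : ℕ) (σ : Equiv.Perm (Fin k)), σ ∈ G k) ∨
    (∀ (k : ℕ) (σ : Equiv.Perm (Fin k)),
      σ ∈ G k ↔ ∀ i : Fin k, Even ((i : ℕ) + (σ i : ℕ))) := by
  have hH := WS.good_HG hfilt hcompat hws
  obtain ⟨σ, hσ, hσ1⟩ := h5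
  have h02 := WS.R02_of_ne hH ((WS.mem_G_iff hcompat σ).1 hσ)
    (fun h => hσ1 (WS.ext_inj (h.trans WS.ext_one.symm)))
  by_cases hpar : ∀ f ∈ WS.HG hcompat, ∀ x, Even (x + f x)
  · right
    intro k τ
    rw [WS.mem_G_iff hcompat]
    constructor
    · intro h i
      have := hpar _ h i
      rwa [WS.ext_lt τ i.2] at this
    · intro h
      refine WS.mem_of_swaps k _ (fun x hx => WS.ext_ge τ hx) (fun x => ?_)
      by_cases hx : x < k
      · rw [WS.ext_lt τ hx]
        exact WS.R_parity hH h02 _ _ (h ⟨x, hx⟩)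
      · rw [WS.ext_ge τ (by omega)]
        exact WS.R_refl _
  · left
    push Not at hpar
    obtain ⟨f, hf, x, hx⟩ := hpar
    intro k τ
    rw [WS.mem_G_iff hcompat]
    exact WS.mem_of_swaps k _ (fun x hx => WS.ext_ge τ hx)
      (fun y => WS.R_all hH h02 hf hx _ _)
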